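/- Let q be a prime power with q ≡ 1 (mod 20). Then (q,5) gives a 3-design if and only if (q,10) gives a 3-design; that is, the PSL(2,q)-orbit of the subgroup of order 5 of F_q^× is the block set of a 3-design on PG(1,q) if and only if the PSL(2,q)-orbit of the subgroup of order 10 of F_q^× is the block set of a 3-design on PG(1,q). -/

import Mathlib

/-!
Setting: `F` is a finite field of order `q`. The projective line `PG(1,q)` is
modelled as `Projectivization F (Fin 2 → F)`. Since scalar matrices act trivially
on the projective line, the images of a set under all elements of `SL(2,F)` form
exactly its `PSL(2,F)`-orbit; `mapSL g` is the map of the projective line induced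
by `g : SL(2,F)`. For `k ∣ q - 1`, the unique subgroup of order `k` of `Fˣ` is the
set of `k`-th roots of unity `{x : F | x ^ k = 1}`, embedded into the projective
line via `x ↦ [x : 1]`. `(q, k)` gives a 3-design iff there is `lam > 0` such that
every 3-subset of the projective line lies in exactly `lam` blocks of the orbit.
-/

noncomputable section

open Matrix

/-- The point at infinity `[1 : 0]` of the projective line over `F`. -/
def inftyPt (F : Type) [Field F] : Projectivization F (Fin 2 → F) :=
  Projectivization.mk F ![1, 0] (by
    intro h
    simpa using congrFun h 0)

/-- The embedding of `F` into the projective line, `x ↦ [x : 1]`. -/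
def embedPt (F : Type) [Field F] (x : F) : Projectivization F (Fin 2 → F) :=
  Projectivization.mk F ![x, 1] (by
    intro h
    simpa using congrFun h 1)

/-- The action of `g : SL(2,F)` on the projective line (as linear fractional
transformation). -/
def mapSL {F : Type} [Field F] (g : Matrix.SpecialLinearGroup (Fin 2) F) :
    Projectivization F (Fin 2 → F) → Projectivization F (Fin 2 → F) :=
  Projectivization.map (Matrix.SpecialLinearGroup.toLin' g : (Fin 2 → F) →ₗ[F] (Fin 2 → F))
    (Matrix.SpecialLinearGroup.toLin' g).injective

/-- The starter block: the unique subgroup of order `k` of `Fˣ` (the `k`-th roots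
of unity, for `k ∣ q - 1`), regarded as a subset of the projective line. -/
def starterB (F : Type) [Field F] (k : ℕ) : Set (Projectivization F (Fin 2 → F)) :=
  embedPt F '' {x : F | x ^ k = 1}

/-- The `PSL(2,F)`-orbit `GB` of the starter block. -/
def designBlocks (F : Type) [Field F] (k : ℕ) :
    Set (Set (Projectivization F (Fin 2 → F))) :=
  {S | ∃ g : Matrix.SpecialLinearGroup (Fin 2) F, S = mapSL g '' starterB F k}

/-- `GB` is the block set of a `3-(q+1, k, lam)` design: `lam` is positive and every
3-subset of the projective line is contained in exactly `lam` blocks. -/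
def isThreeDesign (F : Type) [Field F] (k lam : ℕ) : Prop :=
  0 < lam ∧
    ∀ T : Finset (Projectivization F (Fin 2 → F)), T.card = 3 →
      {S ∈ designBlocks F k | (T : Set (Projectivization F (Fin 2 → F))) ⊆ S}.ncard = lam

/-- `(q, k)` gives a 3-design. -/
def gives3Design (F : Type) [Field F] (k : ℕ) : Prop :=
  ∃ lam : ℕ, isThreeDesign F k lam

/-!
Let `χ` be the quadratic character of `F`. The sign of three points of the projective line is `χ`
of the product of the determinants `[uv][vw][wu]` of representatives; it is invariant under
`SL(2,F)`, and `SL(2,F)` has exactly two orbits on ordered triples of distinct points, told apart by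
the sign and exchanged by any element of `GL(2,F)` of nonsquare determinant. Counting pairs of a
triple and a block containing it with weight the sign, the orbit of a block `B` is therefore a
3-design iff the signs of the triples in `B` sum to zero.

When `B` consists of the powers of a root of unity `w` with `χ(w) = χ(-1) = 1`, this sum is a
multiple of `∑ f(d) f(e) f(h)` over `d + e + h = 0`, where `f(d) = χ(1 - wᵈ)` is even. For `w` of
order 10 the factorization `1 - w²ᵈ = (1 - wᵈ)(1 - wᵈ⁺⁵)` gives `f(1) = f(3) = f(2) f(4)`, and the
sums for `w²` and `w` become `6 (f(2) + f(4))` and `12 (f(2) + f(4)) (2 + f(2) f(4) f(5))`. They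
vanish together because the last factor is odd.
-/

open MulAction Function
open scoped LinearAlgebra.Projectivization MatrixGroups Pointwise

section OrbitDesign

variable {G X ι : Type*} [Group G] [MulAction G X]

variable (G) in
/-- The number of blocks in the `G`-orbit of `B` that contain every entry of the tuple `t`. -/
def blockCount (B : Set X) (t : ι → X) : ℕ :=
  {S ∈ orbit G B | Set.range t ⊆ S}.ncard

lemma blockCount_smul (B : Set X) (g : G) (t : ι → X) :
    blockCount G B (g • t) = blockCount G B t := by
  have range_smul : Set.range (g • t) = g • Set.range t := by
    simp only [← Set.image_smul, ← Set.range_comp]; rfl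
  have blocks_smul : {S ∈ orbit G B | Set.range (g • t) ⊆ S} =
      (g • ·) '' {S ∈ orbit G B | Set.range t ⊆ S} := by
    ext S
    rw [Set.image_smul, Set.mem_smul_set_iff_inv_smul_mem, Set.mem_sep_iff, Set.mem_sep_iff,
      range_smul, Set.smul_set_subset_iff_subset_inv_smul_set, ← orbit_eq_iff, ← orbit_eq_iff,
      orbit_smul]
  rw [blockCount, blocks_smul, Set.ncard_image_of_injective _ (MulAction.injective g), blockCount]

lemma blockCount_pos [Finite X] {B : Set X} {t : ι → X} (ht : Set.range t ⊆ B) :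
    0 < blockCount G B t :=
  (Set.ncard_pos (Set.toFinite _)).2 ⟨B, mem_orbit_self B, ht⟩

variable [Fintype X] [Fintype ι] [DecidableEq ι]

open Classical in
lemma sum_ite_range_subset {R : Type*} [AddCommMonoid R] (B : Set X) [Fintype B]
    (φ : (ι → X) → R) :
    ∑ t, (if Set.range t ⊆ B then φ t else 0) = ∑ t : ι → B, φ (Subtype.val ∘ t) := by
  refine (Fintype.sum_of_injective (fun t : ι → B ↦ Subtype.val ∘ t)
    Subtype.val_injective.comp_left _ _ (fun t ht ↦ if_neg fun htB ↦ ht ?_) fun t ↦ ?_).symm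
  · exact ⟨fun i ↦ ⟨t i, htB ⟨i, rfl⟩⟩, rfl⟩
  · exact (if_pos (by rintro _ ⟨i, rfl⟩; exact (t i).2)).symm

lemma sum_mul_blockCount {R : Type*} [CommSemiring R] {φ : (ι → X) → R}
    (hφ : ∀ (g : G) t, φ (g • t) = φ t) (B : Set X) [Fintype B] :
    ∑ t, φ t * blockCount G B t = (orbit G B).ncard * ∑ t : ι → B, φ (Subtype.val ∘ t) := by
  classical
  have orbit_finite : (orbit G B).Finite := Set.toFinite _
  have blockCount_eq_sum (t : ι → X) : (blockCount G B t : R) =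
      ∑ S ∈ orbit_finite.toFinset, if Set.range t ⊆ S then 1 else 0 := by
    rw [Finset.sum_boole, blockCount, ← Set.ncard_coe_finset]
    congr 2
    ext S
    simp
  have sum_block (S : Set X) (hS : S ∈ orbit G B) :
      ∑ t, (if Set.range t ⊆ S then φ t else 0) = ∑ t : ι → B, φ (Subtype.val ∘ t) := by
    obtain ⟨g, rfl⟩ := hS
    rw [← sum_ite_range_subset, ← (MulAction.bijective g).sum_comp]
    refine Finset.sum_congr rfl fun t _ ↦ ?_
    simp [hφ, Set.range_subset_iff]
  calc ∑ t, φ t * (blockCount G B t : R)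
    _ = ∑ S ∈ orbit_finite.toFinset, ∑ t, if Set.range t ⊆ S then φ t else 0 := by
      simp_rw [blockCount_eq_sum, Finset.mul_sum, mul_ite, mul_one, mul_zero]
      exact Finset.sum_comm
    _ = ∑ _S ∈ orbit_finite.toFinset, ∑ t : ι → B, φ (Subtype.val ∘ t) :=
      Finset.sum_congr rfl fun S hS ↦ sum_block S (orbit_finite.mem_toFinset.1 hS)
    _ = (orbit G B).ncard * ∑ t : ι → B, φ (Subtype.val ∘ t) := by
      rw [Finset.sum_const, nsmul_eq_mul, Set.ncard_eq_toFinset_card _ orbit_finite]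

end OrbitDesign

lemma sum_sign_mul_eq_zero_iff {α : Type*} [Fintype α] {σ N : α → ℤ}
    (hσ : ∀ a, σ a = 0 ∨ σ a = 1 ∨ σ a = -1) (sum_σ : ∑ a, σ a = 0)
    (hN : ∀ a b, σ a ≠ 0 → σ a = σ b → N a = N b) :
    ∑ a, σ a * N a = 0 ↔ ∀ a b, σ a ≠ 0 → σ b ≠ 0 → N a = N b := by
  constructor
  · intro sum_σN a b ha hb
    by_cases hab : σ a = σ b
    · exact hN a b ha hab
    -- On its support `σ` takes at most the two values `σ a` and `σ b = -σ a`, so there `N` is an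
    -- affine function of `σ`.
    have interpolation (c : α) :
        2 * (σ c * N c) = (N a + N b) * σ c + σ a * (N a - N b) * σ c ^ 2 := by
      by_cases hc : σ c = 0
      · simp [hc]
      by_cases hca : σ c = σ a
      · rw [hN c a hc hca]
        grind
      · rw [hN c b hc (by grind)]
        grind
    have sum_sq_pos : 0 < ∑ c, σ c ^ 2 :=
      Finset.sum_pos' (fun _ _ ↦ sq_nonneg _) ⟨a, Finset.mem_univ a, by positivity⟩
    have h := Finset.sum_congr rfl fun c (_ : c ∈ Finset.univ) ↦ interpolation c
    rw [← Finset.mul_sum, Finset.sum_add_distrib, ← Finset.mul_sum, ← Finset.mul_sum, sum_σN,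
      sum_σ, mul_zero, mul_zero, zero_add, eq_comm] at h
    simpa [ha, sum_sq_pos.ne', sub_eq_zero] using h
  · intro hconst
    by_cases hsupp : ∃ a, σ a ≠ 0
    · obtain ⟨a, ha⟩ := hsupp
      calc ∑ b, σ b * N b = ∑ b, σ b * N a := by
            refine Finset.sum_congr rfl fun b _ ↦ ?_
            by_cases hb : σ b = 0
            · simp [hb]
            · rw [hconst a b ha hb]
        _ = 0 := by rw [← Finset.sum_mul, sum_σ, zero_mul]
    · push Not at hsupp
      simp [hsupp]

section Bracket

variable {F : Type*} [Field F]

/-- The symplectic form `u₀ v₁ - u₁ v₀` on the plane. -/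
def bracket (u v : Fin 2 → F) : F :=
  (Matrix.of ![u, v]).det

lemma bracket_apply (u v : Fin 2 → F) : bracket u v = u 0 * v 1 - u 1 * v 0 := by
  simp [bracket, det_fin_two, mul_comm]

lemma bracket_smul_smul (a b : F) (u v : Fin 2 → F) :
    bracket (a • u) (b • v) = a * b * bracket u v := by
  simp only [bracket_apply, Pi.smul_apply, smul_eq_mul]
  ring

lemma bracket_mulVec (M : Matrix (Fin 2) (Fin 2) F) (u v : Fin 2 → F) :
    bracket (M *ᵥ u) (M *ᵥ v) = M.det * bracket u v := by
  have rows_mulVec : Matrix.of ![M *ᵥ u, M *ᵥ v] = Matrix.of ![u, v] * Mᵀ := by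
    ext i; fin_cases i <;> simp [Matrix.mul_apply_eq_vecMul, vecMul_transpose]
  rw [bracket, rows_mulVec, det_mul, det_transpose, mul_comm, bracket]

lemma bracket_rep_ne_zero_iff {p q : ℙ F (Fin 2 → F)} : bracket p.rep q.rep ≠ 0 ↔ p ≠ q := by
  rw [← Projectivization.linearIndependent_pair_iff_ne, bracket, ← isUnit_iff_ne_zero,
    ← Matrix.isUnit_iff_isUnit_det, ← Matrix.linearIndependent_rows_iff_isUnit]
  rfl

lemma sum_bracket_smul_eq_zero (u : Fin 3 → Fin 2 → F) :
    ∑ i, bracket (u (i + 1)) (u (i + 2)) • u i = 0 := by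
  ext j
  fin_cases j <;> simp [Fin.sum_univ_three, bracket_apply] <;> ring

lemma exists_eq_mk_sum_eq_zero {t : Fin 3 → ℙ F (Fin 2 → F)} (ht : Injective t) :
    ∃ (v : Fin 3 → Fin 2 → F) (hv : ∀ i, v i ≠ 0),
      t = (fun i ↦ .mk F (v i) (hv i)) ∧ ∑ i, v i = 0 := by
  have coeff_ne_zero (i : Fin 3) : bracket (t (i + 1)).rep (t (i + 2)).rep ≠ 0 :=
    bracket_rep_ne_zero_iff.2 (ht.ne (by simp))
  refine ⟨fun i ↦ bracket (t (i + 1)).rep (t (i + 2)).rep • (t i).rep,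
    fun i ↦ smul_ne_zero (coeff_ne_zero i) (t i).rep_nonzero, funext fun i ↦ ?_,
    sum_bracket_smul_eq_zero fun i ↦ (t i).rep⟩
  conv_lhs => rw [← (t i).mk_rep]
  exact (Projectivization.mk_eq_mk_iff' ..).2 ⟨(bracket (t (i + 1)).rep (t (i + 2)).rep)⁻¹, by
    rw [smul_smul, inv_mul_cancel₀ (coeff_ne_zero i), one_smul]⟩

lemma prod_bracket_of_sum_eq_zero {v : Fin 3 → Fin 2 → F} (hv : ∑ i, v i = 0) :
    ∏ i, bracket (v i) (v (i + 1)) = bracket (v 0) (v 1) ^ 3 := by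
  have v_two : v 2 = -(v 0 + v 1) := by
    rw [Fin.sum_univ_three] at hv
    exact eq_neg_of_add_eq_zero_right hv
  simp only [Fin.prod_univ_three, Fin.reduceAdd, zero_add, v_two, bracket_apply,
    Pi.neg_apply, Pi.add_apply]
  ring

lemma exists_sl_mulVec_eq_smul {u v : Fin 3 → Fin 2 → F} (hu : ∑ i, u i = 0) (hv : ∑ i, v i = 0)
    (hu₀ : bracket (u 0) (u 1) ≠ 0) {c : F}
    (hc : c ^ 2 * bracket (v 0) (v 1) = bracket (u 0) (u 1)) :
    ∃ g : SL(2, F), ∀ i, g.1 *ᵥ u i = c • v i := by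
  let P := Matrix.of ![u 0, u 1]
  let Q := Matrix.of ![v 0, v 1]
  have det_P : P.det ≠ 0 := hu₀
  let M := (P⁻¹ * c • Q)ᵀ
  have det_M : M.det = 1 := by
    rw [det_transpose, det_mul, det_nonsing_inv, Ring.inverse_eq_inv', det_smul, Fintype.card_fin,
      show c ^ 2 * Q.det = P.det from hc, inv_mul_cancel₀ det_P]
  have M_mulVec_row (i : Fin 2) : M *ᵥ P i = c • Q i := by
    rw [mulVec_transpose, ← mul_apply_eq_vecMul, mul_nonsing_inv_cancel_left _ _ det_P.isUnit]
    rfl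
  have M_mulVec_zero : M *ᵥ u 0 = c • v 0 := M_mulVec_row 0
  have M_mulVec_one : M *ᵥ u 1 = c • v 1 := M_mulVec_row 1
  have M_mulVec_two : M *ᵥ u 2 = c • v 2 := by
    rw [Fin.sum_univ_three] at hu hv
    rw [eq_neg_of_add_eq_zero_right hu, eq_neg_of_add_eq_zero_right hv, mulVec_neg, mulVec_add,
      M_mulVec_zero, M_mulVec_one, smul_neg, smul_add]
  exact ⟨⟨M, det_M⟩, Fin.forall_fin_succ.2 ⟨M_mulVec_zero,
    Fin.forall_fin_two.2 ⟨M_mulVec_one, M_mulVec_two⟩⟩⟩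

end Bracket

section TripleSign

variable {F : Type*} [Field F] [Fintype F] [DecidableEq F]

/-- The class modulo squares of `[uv][vw][wu]`, where `u`, `v`, `w` represent the three points of
`t` and `[uv]` is `bracket u v`: `1` for a square, `-1` for a nonsquare, and `0` if two of the
points coincide. It does not depend on the representatives, each of which occurs twice. -/
def tripleSign (t : Fin 3 → ℙ F (Fin 2 → F)) : ℤ :=
  quadraticChar F (∏ i, bracket (t i).rep (t (i + 1)).rep)

lemma tripleSign_mk (v : Fin 3 → Fin 2 → F) (hv : ∀ i, v i ≠ 0) :
    tripleSign (fun i ↦ .mk F (v i) (hv i)) =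
      quadraticChar F (∏ i, bracket (v i) (v (i + 1))) := by
  choose a ha using fun i ↦ Projectivization.exists_smul_eq_mk_rep F (v i) (hv i)
  have prod_eq : ∏ i, bracket (a i • v i) (a (i + 1) • v (i + 1)) =
      (∏ i, (a i : F)) ^ 2 * ∏ i, bracket (v i) (v (i + 1)) := by
    simp only [Units.smul_def, bracket_smul_smul, Fin.prod_univ_three, Fin.reduceAdd, zero_add]
    ring
  have prod_ne_zero : ∏ i, (a i : F) ≠ 0 := Finset.prod_ne_zero_iff.2 fun i _ ↦ (a i).ne_zero
  simp only [tripleSign, ← ha]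
  rw [prod_eq, map_mul, quadraticChar_sq_one' prod_ne_zero, one_mul]

lemma tripleSign_ne_zero_iff {t : Fin 3 → ℙ F (Fin 2 → F)} : tripleSign t ≠ 0 ↔ Injective t := by
  simp only [tripleSign, ne_eq, quadraticChar_eq_zero_iff, Finset.prod_eq_zero_iff,
    Finset.mem_univ, true_and, not_exists]
  simp only [← ne_eq, bracket_rep_ne_zero_iff]
  refine ⟨fun h i j hij ↦ ?_, fun h i ↦ h.ne (by simp)⟩
  have t_zero_ne : t 0 ≠ t 1 := h 0
  have t_one_ne : t 1 ≠ t 2 := h 1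
  have t_two_ne : t 2 ≠ t 0 := h 2
  fin_cases i <;> fin_cases j <;> simp_all

lemma tripleSign_smul (g : GL (Fin 2) F) (t : Fin 3 → ℙ F (Fin 2 → F)) :
    tripleSign (g • t) = quadraticChar F g.det * tripleSign t := by
  have smul_eq : g • t = fun i ↦ .mk F (g.1 *ᵥ (t i).rep)
      ((smul_ne_zero_iff_ne g).2 (t i).rep_nonzero) := by
    ext1 i
    conv_lhs => rw [Pi.smul_apply, ← (t i).mk_rep]
    rfl
  rw [smul_eq, tripleSign_mk, tripleSign]
  simp only [bracket_mulVec, Finset.prod_mul_distrib, map_mul, Finset.prod_const, map_pow]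
  congr 1
  rcases quadraticChar_dichotomy (Units.ne_zero g.det) with h | h <;> simp_all

lemma tripleSign_sl_smul (g : SL(2, F)) (t : Fin 3 → ℙ F (Fin 2 → F)) :
    tripleSign (g • t) = tripleSign t := by
  simpa using! tripleSign_smul (g : GL (Fin 2) F) t

lemma sum_tripleSign [Fintype (ℙ F (Fin 2 → F))] (hF : ringChar F ≠ 2) :
    ∑ t : Fin 3 → ℙ F (Fin 2 → F), tripleSign t = 0 := by
  obtain ⟨n, hn⟩ := quadraticChar_exists_neg_one' hF
  let g : GL (Fin 2) F := .mkOfDetNeZero !![(n : F), 0; 0, 1] (by simp)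
  have sign_smul (t : Fin 3 → ℙ F (Fin 2 → F)) : tripleSign (g • t) = -tripleSign t := by
    have det_g : (g.det : F) = n := by simp [g, GeneralLinearGroup.mkOfDetNeZero]
    rw [tripleSign_smul, det_g, hn, neg_one_mul]
  have sum_eq_neg := (MulAction.bijective g).sum_comp (tripleSign (F := F))
  simp only [sign_smul, Finset.sum_neg_distrib] at sum_eq_neg
  linarith

-- For representatives that sum to zero the sign is `χ` of a single bracket `Δ`, and a linear map
-- that matches two of the vectors up to a common scalar also matches the third.
lemma exists_sl_smul_eq_of_tripleSign_eq {s t : Fin 3 → ℙ F (Fin 2 → F)} (hs : tripleSign s ≠ 0)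
    (hst : tripleSign s = tripleSign t) : ∃ g : SL(2, F), g • s = t := by
  obtain ⟨u, hu, rfl, sum_u⟩ := exists_eq_mk_sum_eq_zero (tripleSign_ne_zero_iff.1 hs)
  obtain ⟨v, hv, rfl, sum_v⟩ := exists_eq_mk_sum_eq_zero (tripleSign_ne_zero_iff.1 (hst ▸ hs))
  simp only [tripleSign_mk, prod_bracket_of_sum_eq_zero sum_u, prod_bracket_of_sum_eq_zero sum_v]
    at hs hst
  set Δu := bracket (u 0) (u 1)
  set Δv := bracket (v 0) (v 1)
  have Δu_ne_zero : Δu ≠ 0 := by rintro h; simp [h] at hs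
  have Δv_ne_zero : Δv ≠ 0 := by rintro h; simp [hst, h] at hs
  obtain ⟨r, hr⟩ : IsSquare (Δu ^ 3 * Δv ^ 3) := by
    rw [← quadraticChar_one_iff_isSquare (by positivity), map_mul, ← hst, ← sq,
      quadraticChar_sq_one (by positivity)]
  obtain ⟨g, hg⟩ := exists_sl_mulVec_eq_smul sum_u sum_v Δu_ne_zero
    (c := r / (Δu * Δv ^ 2)) (by
      change _ * Δv = Δu
      field_simp
      linear_combination -hr)
  exact ⟨g, funext fun i ↦ (Projectivization.mk_eq_mk_iff' ..).2 ⟨_, (hg i).symm⟩⟩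

end TripleSign

section DesignCriterion

variable {F : Type*} [Field F] [Fintype F] [DecidableEq F]

lemma blockCount_eq_iff_sum_tripleSign_eq_zero (hF : ringChar F ≠ 2)
    (B : Set (ℙ F (Fin 2 → F))) [Fintype B] :
    (∀ s t : Fin 3 → ℙ F (Fin 2 → F), Injective s → Injective t →
        blockCount SL(2, F) B s = blockCount SL(2, F) B t) ↔
      ∑ t : Fin 3 → B, tripleSign (Subtype.val ∘ t) = 0 := by
  have : Fintype (ℙ F (Fin 2 → F)) := .ofFinite _
  have orbit_ncard_ne_zero : ((orbit SL(2, F) B).ncard : ℤ) ≠ 0 :=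
    mod_cast ((Set.ncard_pos (Set.toFinite _)).2 (nonempty_orbit B)).ne'
  have blockCount_eq (s t : Fin 3 → ℙ F (Fin 2 → F)) (hs : tripleSign s ≠ 0)
      (hst : tripleSign s = tripleSign t) :
      (blockCount SL(2, F) B s : ℤ) = blockCount SL(2, F) B t := by
    obtain ⟨g, rfl⟩ := exists_sl_smul_eq_of_tripleSign_eq hs hst
    rw [blockCount_smul]
  have sum_eq_zero_iff := sum_sign_mul_eq_zero_iff (σ := tripleSign)
    (fun _ ↦ quadraticChar_isQuadratic F _) (sum_tripleSign hF) blockCount_eq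
  rw [sum_mul_blockCount tripleSign_sl_smul, mul_eq_zero_iff_left orbit_ncard_ne_zero]
    at sum_eq_zero_iff
  simp only [sum_eq_zero_iff, tripleSign_ne_zero_iff, Nat.cast_inj]

end DesignCriterion

section TriangleSum

/-- The sum of `f d * f e * f h` over all `d`, `e`, `h` with `d + e + h = 0`. -/
def triangleSum {A R : Type*} [AddCommGroup A] [Fintype A] [CommSemiring R] (f : A → R) : R :=
  ∑ d, ∑ e, f d * f e * f (-(d + e))

lemma sum_prod_sub_eq_card_mul {A R : Type*} [AddCommGroup A] [Fintype A] [CommSemiring R]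
    (f : A → R) :
    ∑ t : Fin 3 → A, ∏ i, f (t (i + 1) - t i) = Fintype.card A * triangleSum f := by
  let gaps : (Fin 3 → A) ≃ A × A × A :=
    { toFun t := (t 0, t 1 - t 0, t 2 - t 1)
      invFun p := ![p.1, p.1 + p.2.1, p.1 + p.2.1 + p.2.2]
      left_inv t := by ext i; fin_cases i <;> simp
      right_inv p := by simp }
  calc ∑ t : Fin 3 → A, ∏ i, f (t (i + 1) - t i)
    _ = ∑ p : A × A × A, f p.2.1 * f p.2.2 * f (-(p.2.1 + p.2.2)) :=
      Fintype.sum_equiv gaps _ _ fun t ↦ by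
        simp [gaps, Fin.prod_univ_three]
    _ = Fintype.card A * triangleSum f := by
      simp [triangleSum, Fintype.sum_prod_type]

lemma triangleSum_zmod_five {R : Type*} [CommRing R] {f : ZMod 5 → R} (f_zero : f 0 = 0)
    (hneg : ∀ d, f (-d) = f d) (f_one_sq : f 1 ^ 2 = 1) (f_two_sq : f 2 ^ 2 = 1) :
    triangleSum f = 6 * (f 1 + f 2) := by
  have f_three : f 3 = f 2 := hneg 2
  have f_four : f 4 = f 1 := hneg 1
  have sum_eq (g : ZMod 5 → R) : ∑ d, g d = g 0 + g 1 + g 2 + g 3 + g 4 := Fin.sum_univ_five g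
  simp only [triangleSum, hneg, sum_eq]
  reduce_mod_char
  simp only [f_zero, f_three, f_four]
  linear_combination 6 * f 2 * f_one_sq + 6 * f 1 * f_two_sq

lemma triangleSum_zmod_ten {R : Type*} [CommRing R] [NoZeroDivisors R] {f : ZMod 10 → R}
    (f_zero : f 0 = 0) (hneg : ∀ d, f (-d) = f d)
    (f_two_sq : f 2 ^ 2 = 1) (f_four_sq : f 4 ^ 2 = 1)
    (f_one : f 1 = f 2 * f 4) (f_three : f 3 = f 2 * f 4) :
    triangleSum f = 12 * (f 2 + f 4) * (2 + f 2 * f 4 * f 5) := by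
  have f_six : f 6 = f 4 := hneg 4
  have f_seven : f 7 = f 3 := hneg 3
  have f_eight : f 8 = f 2 := hneg 2
  have f_nine : f 9 = f 1 := hneg 1
  have sum_eq (g : ZMod 10 → R) : ∑ d, g d =
      g 0 + g 1 + g 2 + g 3 + g 4 + g 5 + g 6 + g 7 + g 8 + g 9 :=
    (Fin.sum_univ_castSucc g).trans <| congrArg (· + g 9) <|
      (Fin.sum_univ_castSucc _).trans <| congrArg (· + g 8) <| Fin.sum_univ_eight _
  simp only [triangleSum, hneg, sum_eq]
  reduce_mod_char
  simp only [f_zero, f_six, f_seven, f_eight, f_nine, f_one, f_three]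
  rcases sq_eq_one_iff.1 f_two_sq with f_two | f_two <;>
    rcases sq_eq_one_iff.1 f_four_sq with f_four | f_four <;>
    simp only [f_two, f_four] <;>
    ring

end TriangleSum

section GapChar

lemma pow_val_add {M : Type*} [Monoid M] {k : ℕ} [NeZero k] {w : M} (hw : w ^ k = 1)
    (i j : ZMod k) : w ^ (i + j).val = w ^ i.val * w ^ j.val := by
  rw [ZMod.val_add, ← pow_eq_pow_mod _ hw, pow_add]

variable {F : Type*} [Field F] [Fintype F] [DecidableEq F] {k : ℕ}

/-- The function `d ↦ χ(1 - wᵈ)` on `ZMod k`, where `χ` is the quadratic character of `F`; it is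
meant for `w ^ k = 1`. -/
def gapChar (k : ℕ) (w : F) (d : ZMod k) : ℤ :=
  quadraticChar F (1 - w ^ d.val)

lemma gapChar_natCast {w : F} (hw : w ^ k = 1) (n : ℕ) :
    gapChar k w n = quadraticChar F (1 - w ^ n) := by
  rw [gapChar, ZMod.val_natCast, ← pow_eq_pow_mod _ hw]

lemma gapChar_zero (w : F) : gapChar k w 0 = 0 := by
  simp [gapChar]

lemma gapChar_sq_eq_one [NeZero k] {w : F} (hw : IsPrimitiveRoot w k) {d : ZMod k} (hd : d ≠ 0) :
    gapChar k w d ^ 2 = 1 :=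
  quadraticChar_sq_one <| sub_ne_zero.2 <| Ne.symm <|
    hw.pow_ne_one_of_pos_of_lt ((ZMod.val_ne_zero d).2 hd) d.val_lt

lemma quadraticChar_pow_val_sub_pow_val [NeZero k] {w : F} (hw : w ^ k = 1)
    (hχ : quadraticChar F w = 1) (i j : ZMod k) :
    quadraticChar F (w ^ i.val - w ^ j.val) = gapChar k w (j - i) := by
  have factor : w ^ i.val - w ^ j.val = w ^ i.val * (1 - w ^ (j - i).val) := by
    rw [mul_sub, ← pow_val_add hw, mul_one, add_sub_cancel]
  rw [factor, map_mul, map_pow, hχ, one_pow, one_mul, gapChar]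

lemma gapChar_neg [NeZero k] {w : F} (hw : w ^ k = 1) (hχ : quadraticChar F w = 1)
    (hneg : quadraticChar F (-1) = 1) (d : ZMod k) : gapChar k w (-d) = gapChar k w d :=
  calc gapChar k w (-d)
    _ = quadraticChar F (w ^ d.val - w ^ (0 : ZMod k).val) := by
      rw [quadraticChar_pow_val_sub_pow_val hw hχ, zero_sub]
    _ = quadraticChar F (w ^ (0 : ZMod k).val - w ^ d.val) := by
      rw [← neg_sub, neg_eq_neg_one_mul, map_mul, hneg, one_mul]
    _ = gapChar k w d := by
      rw [quadraticChar_pow_val_sub_pow_val hw hχ, sub_zero]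

lemma gapChar_add_self [NeZero k] {w : F} (hw : w ^ k = 1) {m : ZMod k} (hm : w ^ m.val = -1)
    (d : ZMod k) : gapChar k w (d + d) = gapChar k w d * gapChar k w (d + m) := by
  rw [gapChar, gapChar, gapChar, ← map_mul, pow_val_add hw, pow_val_add hw, hm]
  ring_nf

lemma gapChar_eq_mul [NeZero k] {w : F} (hw : IsPrimitiveRoot w k) {m : ZMod k}
    (hm : w ^ m.val = -1) {d : ZMod k} (hdm : d + m ≠ 0) :
    gapChar k w d = gapChar k w (d + d) * gapChar k w (d + m) := by
  rw [gapChar_add_self hw.pow_eq_one hm, mul_assoc, ← sq, gapChar_sq_eq_one hw hdm, mul_one]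

lemma gapChar_pow {w : F} {m n : ℕ} (hw : w ^ n = 1) (hwm : (w ^ m) ^ k = 1) (d : ℕ) :
    gapChar k (w ^ m) d = gapChar n w (m * d : ℕ) := by
  rw [gapChar_natCast hwm, gapChar_natCast hw, pow_mul]

end GapChar

section StarterBlock

variable {F : Type} [Field F] {k : ℕ}

lemma designBlocks_eq_orbit (k : ℕ) : designBlocks F k = orbit SL(2, F) (starterB F k) := by
  ext S
  exact exists_congr fun g ↦ eq_comm

lemma exists_injective_range_eq_of_card {α : Type*} {T : Finset α} {n : ℕ} (hT : T.card = n) :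
    ∃ t : Fin n → α, Injective t ∧ Set.range t = T :=
  ⟨Subtype.val ∘ (T.equivFinOfCardEq hT).symm,
    Subtype.val_injective.comp (Equiv.injective _), by simp [Set.range_comp]⟩

lemma gives3Design_iff_blockCount_eq [Finite F] (hk : 3 ≤ (starterB F k).ncard) :
    gives3Design F k ↔ ∀ s t : Fin 3 → ℙ F (Fin 2 → F), Injective s → Injective t →
      blockCount SL(2, F) (starterB F k) s = blockCount SL(2, F) (starterB F k) t := by
  simp only [gives3Design, isThreeDesign, designBlocks_eq_orbit]
  constructor
  · rintro ⟨lam, -, hlam⟩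
    have blockCount_eq_lam (t : Fin 3 → ℙ F (Fin 2 → F)) (ht : Injective t) :
        blockCount SL(2, F) (starterB F k) t = lam := by
      simpa [blockCount] using hlam (Finset.univ.map ⟨t, ht⟩) (by simp)
    intro s t hs ht
    rw [blockCount_eq_lam s hs, blockCount_eq_lam t ht]
  · intro hconst
    obtain ⟨T, hTB, hT⟩ := Set.exists_subset_card_eq hk
    obtain ⟨s, hs, range_s⟩ := exists_injective_range_eq_of_card
      ((Set.ncard_eq_toFinset_card _ (Set.toFinite T)).symm.trans hT)
    refine ⟨blockCount SL(2, F) (starterB F k) s, blockCount_pos (by simpa [range_s]), ?_⟩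
    intro T hT
    obtain ⟨t, ht, range_t⟩ := exists_injective_range_eq_of_card hT
    rw [← range_t]
    exact hconst t s ht hs

lemma embedPt_injective : Injective (embedPt F) := by
  intro x y hxy
  obtain ⟨a, ha⟩ := (Projectivization.mk_eq_mk_iff' ..).1 hxy
  have ha₁ : a = 1 := by simpa using congrFun ha 1
  simpa [ha₁, eq_comm] using congrFun ha 0

/-- A primitive `k`-th root of unity `w` enumerates the starter block as `i ↦ [wⁱ : 1]`. -/
def zmodEquivStarterB [NeZero k] {w : F} (hw : IsPrimitiveRoot w k) : ZMod k ≃ starterB F k :=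
  .ofBijective (fun i ↦ ⟨embedPt F (w ^ i.val), w ^ i.val, by
      change (w ^ i.val) ^ k = 1
      rw [pow_right_comm, hw.pow_eq_one, one_pow], rfl⟩) <| by
    constructor
    · intro i j hij
      exact ZMod.val_injective k <| hw.pow_inj i.val_lt j.val_lt <|
        embedPt_injective (Subtype.ext_iff.1 hij)
    · rintro ⟨_, x, hx, rfl⟩
      obtain ⟨n, hn, rfl⟩ := hw.eq_pow_of_pow_eq_one hx
      exact ⟨n, Subtype.ext (by simp [ZMod.val_cast_of_lt hn])⟩

variable [Fintype F] [DecidableEq F]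

lemma tripleSign_embedPt (x : Fin 3 → F) :
    tripleSign (embedPt F ∘ x) = ∏ i, quadraticChar F (x i - x (i + 1)) := by
  rw [← map_prod]
  refine (tripleSign_mk (fun i ↦ ![x i, 1]) _).trans ?_
  simp [bracket_apply]

theorem gives3Design_iff_triangleSum_eq_zero [NeZero k] {w : F} (hw : IsPrimitiveRoot w k)
    (hk : 3 ≤ k) (hF : ringChar F ≠ 2) (hχ : quadraticChar F w = 1) :
    gives3Design F k ↔ triangleSum (gapChar k w) = 0 := by
  have : Fintype (starterB F k) := .ofFinite _
  have starterB_ncard : (starterB F k).ncard = k := by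
    rw [← Nat.card_coe_set_eq, ← Nat.card_congr (zmodEquivStarterB hw), Nat.card_zmod]
  have sum_tripleSign_eq : ∑ t : Fin 3 → starterB F k, tripleSign (Subtype.val ∘ t) =
      ∑ t : Fin 3 → ZMod k, ∏ i, gapChar k w (t (i + 1) - t i) := by
    refine (Fintype.sum_equiv (.piCongrRight fun _ ↦ zmodEquivStarterB hw) _ _ fun t ↦ ?_).symm
    refine .trans ?_ (tripleSign_embedPt fun i ↦ w ^ (t i).val).symm
    simp only [quadraticChar_pow_val_sub_pow_val hw.pow_eq_one hχ]
  rw [gives3Design_iff_blockCount_eq (hk.trans_eq starterB_ncard.symm),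
    blockCount_eq_iff_sum_tripleSign_eq_zero hF, sum_tripleSign_eq, sum_prod_sub_eq_card_mul,
    ZMod.card, mul_eq_zero_iff_left (mod_cast NeZero.ne k)]

end StarterBlock

section TenthRoot

lemma pow_five_eq_neg_one {R : Type*} [CommRing R] [NoZeroDivisors R] {w : R}
    (hw : IsPrimitiveRoot w 10) : w ^ 5 = -1 :=
  (hw.pow (by norm_num) (by norm_num)).eq_neg_one_of_two_right

variable {F : Type*} [Field F] [Fintype F]

lemma exists_isPrimitiveRoot {n : ℕ} (hn : n ∣ Fintype.card F - 1) :
    ∃ w : F, IsPrimitiveRoot w n := by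
  obtain ⟨g, hg⟩ := IsCyclic.exists_ofOrder_eq_natCard (α := Fˣ)
  rw [Nat.card_units, Nat.card_eq_fintype_card] at hg
  obtain ⟨m, hm⟩ := hn
  have card_pos : 0 < Fintype.card F - 1 := Nat.sub_pos_of_lt Fintype.one_lt_card
  have primitive : IsPrimitiveRoot (g ^ m) n :=
    (IsPrimitiveRoot.orderOf g).pow (hg ▸ card_pos) (by rw [hg, hm, mul_comm])
  exact ⟨_, IsPrimitiveRoot.coe_units_iff.2 primitive⟩

variable [DecidableEq F]

lemma quadraticChar_neg_one_eq_one (hF : Fintype.card F % 4 ≠ 3) : quadraticChar F (-1) = 1 :=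
  (quadraticChar_one_iff_isSquare (neg_ne_zero.2 one_ne_zero)).2
    (FiniteField.isSquare_neg_one_iff.2 hF)

lemma quadraticChar_eq_one_of_odd_pow {n : ℕ} (hn : Odd n) {x : F}
    (hx : quadraticChar F (x ^ n) = 1) : quadraticChar F x = 1 :=
  hn.strictMono_pow.injective (by rw [← map_pow, hx, one_pow])

variable {w : F}

lemma quadraticChar_eq_one_of_isPrimitiveRoot_ten (hw : IsPrimitiveRoot w 10)
    (hneg : quadraticChar F (-1) = 1) : quadraticChar F w = 1 :=
  quadraticChar_eq_one_of_odd_pow (n := 5) (by decide) (by rwa [pow_five_eq_neg_one hw])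

lemma triangleSum_gapChar_five (hw : IsPrimitiveRoot w 10) (hneg : quadraticChar F (-1) = 1) :
    triangleSum (gapChar 5 (w ^ 2)) = 6 * (gapChar 10 w 2 + gapChar 10 w 4) := by
  have hχ := quadraticChar_eq_one_of_isPrimitiveRoot_ten hw hneg
  have hw2 : IsPrimitiveRoot (w ^ 2) 5 := hw.pow (by norm_num) (by norm_num)
  have gapChar_two : gapChar 5 (w ^ 2) 1 = gapChar 10 w 2 :=
    gapChar_pow hw.pow_eq_one hw2.pow_eq_one 1
  have gapChar_four : gapChar 5 (w ^ 2) 2 = gapChar 10 w 4 :=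
    gapChar_pow hw.pow_eq_one hw2.pow_eq_one 2
  rw [← gapChar_two, ← gapChar_four]
  exact triangleSum_zmod_five (gapChar_zero _)
    (gapChar_neg hw2.pow_eq_one (by rw [map_pow, hχ, one_pow]) hneg)
    (gapChar_sq_eq_one hw2 (by decide)) (gapChar_sq_eq_one hw2 (by decide))

lemma triangleSum_gapChar_ten (hw : IsPrimitiveRoot w 10) (hneg : quadraticChar F (-1) = 1) :
    triangleSum (gapChar 10 w) = 12 * (gapChar 10 w 2 + gapChar 10 w 4) *
      (2 + gapChar 10 w 2 * gapChar 10 w 4 * gapChar 10 w 5) := by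
  have gapChar_even : ∀ d, gapChar 10 w (-d) = gapChar 10 w d :=
    gapChar_neg hw.pow_eq_one (quadraticChar_eq_one_of_isPrimitiveRoot_ten hw hneg) hneg
  have gapChar_six : gapChar 10 w 6 = gapChar 10 w 4 := gapChar_even 4
  have gapChar_eight : gapChar 10 w 8 = gapChar 10 w 2 := gapChar_even 2
  have gapChar_one : gapChar 10 w 1 = gapChar 10 w 2 * gapChar 10 w 6 :=
    gapChar_eq_mul hw (m := 5) (pow_five_eq_neg_one hw) (by decide)
  have gapChar_three : gapChar 10 w 3 = gapChar 10 w 6 * gapChar 10 w 8 :=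
    gapChar_eq_mul hw (m := 5) (pow_five_eq_neg_one hw) (by decide)
  rw [gapChar_six] at gapChar_one
  rw [gapChar_six, gapChar_eight, mul_comm] at gapChar_three
  exact triangleSum_zmod_ten (gapChar_zero w) gapChar_even (gapChar_sq_eq_one hw (by decide))
    (gapChar_sq_eq_one hw (by decide)) gapChar_one gapChar_three

lemma two_add_mul_mul_gapChar_ne_zero (hw : IsPrimitiveRoot w 10) :
    2 + gapChar 10 w 2 * gapChar 10 w 4 * gapChar 10 w 5 ≠ 0 := by
  have sq_eq_one : (gapChar 10 w 2 * gapChar 10 w 4 * gapChar 10 w 5) ^ 2 = 1 := by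
    rw [mul_pow, mul_pow, gapChar_sq_eq_one hw (by decide), gapChar_sq_eq_one hw (by decide),
      gapChar_sq_eq_one hw (by decide)]
    norm_num
  intro h
  nlinarith

end TenthRoot

/-- Theorem 4.1, (i) ↔ (ii): for `q ≡ 1 (mod 20)`, `(q,5)` gives a 3-design iff
`(q,10)` gives a 3-design. -/
theorem stmt_11 (F : Type) [Field F] [Fintype F] [DecidableEq F]
    (q : ℕ) (hq : Fintype.card F = q) (hq20 : q % 20 = 1) :
    gives3Design F 5 ↔ gives3Design F 10 := by
  have char_ne_two : ringChar F ≠ 2 := fun h ↦ by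
    have card_even := FiniteField.even_card_of_char_two h
    lia
  have χ_neg_one : quadraticChar F (-1) = 1 := quadraticChar_neg_one_eq_one (by lia)
  obtain ⟨w, hw⟩ := exists_isPrimitiveRoot (F := F) (n := 10) (by lia)
  have hw2 : IsPrimitiveRoot (w ^ 2) 5 := hw.pow (by norm_num) (by norm_num)
  have χ_w : quadraticChar F w = 1 := quadraticChar_eq_one_of_isPrimitiveRoot_ten hw χ_neg_one
  have χ_w2 : quadraticChar F (w ^ 2) = 1 := by rw [map_pow, χ_w, one_pow]
  rw [gives3Design_iff_triangleSum_eq_zero hw2 (by norm_num) char_ne_two χ_w2,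
    gives3Design_iff_triangleSum_eq_zero hw (by norm_num) char_ne_two χ_w,
    triangleSum_gapChar_five hw χ_neg_one, triangleSum_gapChar_ten hw χ_neg_one,
    mul_eq_zero_iff_right (two_add_mul_mul_gapChar_ne_zero hw)]
  lia
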